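/- Let w ∈ Max be such that the set of extreme points of DF(w) is infinite. Then w is not eventually periodic (there are no m ≥ 0 and p ≥ 1 with w_{r+p} = w_r for all r ≥ m), and DF is injective at w: for every w' ∈ Max with DF(w') = DF(w), one has w' = w. -/

import Mathlib

open Filter Topology MeasureTheory

/-- The sequence space `Σ⁺ = {0,1,2}^ℕ` (with the product topology). -/
abbrev Seq3 := ℕ → Fin 3

/-- The shift map `σ`. -/
def shift (s : Seq3) : Seq3 := fun n => s (n + 1)

/-- The observable `κ(s) = e_{s₀}`. -/
noncomputable def kappa (s : Seq3) : Fin 3 → ℝ := fun i => if i = s 0 then 1 else 0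

/-- The cocycle `κ_σ(s,r) = Σ_{i<r} κ(σⁱ s)`. -/
noncomputable def birk (s : Seq3) (r : ℕ) : Fin 3 → ℝ :=
  ∑ i ∈ Finset.range r, kappa (shift^[i] s)

/-- The Birkhoff digit frequency of `s` exists and equals `v`. -/
def hasFreq (s : Seq3) (v : Fin 3 → ℝ) : Prop :=
  Tendsto (fun r : ℕ => (r : ℝ)⁻¹ • birk s r) atTop (nhds v)

/-- The lexicographic order on `Σ⁺`. -/
def lexLe (s t : Seq3) : Prop :=
  s = t ∨ ∃ n, (∀ i, i < n → s i = t i) ∧ s n < t n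

/-- The set `Max` of maximal sequences. -/
def MaxSet : Set Seq3 := {w | w 0 = 2 ∧ ∀ r : ℕ, lexLe (shift^[r] w) w}

/-- The symbolic β-shift `B(w)`. -/
def BetaShift (w : Seq3) : Set Seq3 := {s | ∀ r : ℕ, lexLe (shift^[r] s) w}

/-- The digit frequency set `DF(w)`. -/
def DF (w : Seq3) : Set (Fin 3 → ℝ) := {v | ∃ s ∈ BetaShift w, hasFreq s v}

/-- The Misiurewicz–Ziemian digit frequency set `DF_MZ(X)` of a subset `X ⊆ Σ⁺`. -/
def DFMZ (X : Set Seq3) : Set (Fin 3 → ℝ) :=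
  {v | ∃ (s : ℕ → Seq3) (r : ℕ → ℕ), (∀ i, s i ∈ X) ∧ Tendsto r atTop atTop ∧
    Tendsto (fun i => (r i : ℝ)⁻¹ • birk (s i) (r i)) atTop (nhds v)}

/-- The standard 2-simplex `Δ ⊆ ℝ³`. -/
def Delta : Set (Fin 3 → ℝ) := {α | (∀ i, 0 ≤ α i) ∧ α 0 + α 1 + α 2 = 1}

/-- `Δ' = {α ∈ Δ : α₂ > 0}`. -/
def Delta' : Set (Fin 3 → ℝ) := {α | α ∈ Delta ∧ 0 < α 2}

/-- `I` is the infimax sequence of `α`: the infimum, in the lexicographic order, of the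
(nonempty) set of maximal sequences with digit frequency `α`; it belongs to `Max`. -/
def IsInfimax (α : Fin 3 → ℝ) (I : Seq3) : Prop :=
  {w | w ∈ MaxSet ∧ hasFreq w α}.Nonempty ∧ I ∈ MaxSet ∧
    (∀ w, w ∈ MaxSet ∧ hasFreq w α → lexLe I w) ∧
    (∀ b : Seq3, (∀ w, w ∈ MaxSet ∧ hasFreq w α → lexLe b w) → lexLe b I)

/-- The closure of the forward `σ`-orbit of `s` (e.g. `C_α` is `orbitClosure I(α)`). -/
def orbitClosure (s : Seq3) : Set Seq3 := closure {t | ∃ r : ℕ, shift^[r] s = t}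

/-- A vector in `ℝ³` is rational if all its coordinates are. -/
def IsRat (v : Fin 3 → ℝ) : Prop := ∀ i, ∃ q : ℚ, v i = (q : ℝ)

/-- A minimal set of a continuous map: a nonempty compact invariant set in which every
point has dense forward orbit. -/
def IsMinimalSet {X : Type*} [TopologicalSpace X] (f : X → X) (C : Set X) : Prop :=
  C.Nonempty ∧ IsCompact C ∧ Set.MapsTo f C C ∧
    ∀ x ∈ C, C ⊆ closure {y | ∃ n : ℕ, f^[n] x = y}


/-- Basis vector. -/
noncomputable def ee (a : Fin 3) : Fin 3 → ℝ := fun i => if i = a then 1 else 0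

lemma shift_iter (s : Seq3) (r n : ℕ) : (shift^[r] s) n = s (n + r) := by
  induction r generalizing n with
  | zero => rfl
  | succ r ih => rw [Function.iterate_succ_apply', shift, ih]; congr 1; omega

lemma birk_succ (s : Seq3) (r : ℕ) : birk s (r + 1) = birk s r + ee (s r) := by
  unfold birk
  rw [Finset.sum_range_succ]
  congr 1
  funext i
  simp [kappa, ee, shift_iter]

lemma birk_zero (s : Seq3) : birk s 0 = 0 := by simp [birk]

lemma lexLe_trans {a b c : Seq3} (h1 : lexLe a b) (h2 : lexLe b c) : lexLe a c := by
  rcases h1 with rfl | ⟨n, hn, hn'⟩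
  · exact h2
  rcases h2 with rfl | ⟨k, hk, hk'⟩
  · exact Or.inr ⟨n, hn, hn'⟩
  right
  rcases lt_trichotomy n k with h | h | h
  · exact ⟨n, fun i hi => (hn i hi).trans (hk i (hi.trans h)), by rw [← hk n h]; exact hn'⟩
  · subst h
    exact ⟨n, fun i hi => (hn i hi).trans (hk i hi), hn'.trans hk'⟩
  · exact ⟨k, fun i hi => (hn i (hi.trans h)).trans (hk i hi), by rw [hn k h]; exact hk'⟩

lemma DF_mono {w w' : Seq3} (h : lexLe w w') : DF w ⊆ DF w' := by
  rintro v ⟨s, hs, hv⟩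
  exact ⟨s, fun r => lexLe_trans (hs r) h, hv⟩

lemma hasFreq_of_bound (s : Seq3) (v : Fin 3 → ℝ) (C : ℝ)
    (h : ∀ r : ℕ, ∀ i, |birk s r i - r * v i| ≤ C * √r + C) : hasFreq s v := by
  unfold hasFreq
  rw [tendsto_pi_nhds]
  intro i
  rw [tendsto_iff_dist_tendsto_zero]
  have h1 : Tendsto (fun r : ℕ => C * (√(r : ℝ))⁻¹ + C * ((r : ℝ))⁻¹) atTop (nhds 0) := by
    have a1 : Tendsto (fun r : ℕ => (√(r : ℝ))⁻¹) atTop (nhds 0) :=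
      tendsto_inv_atTop_zero.comp (Real.tendsto_sqrt_atTop.comp tendsto_natCast_atTop_atTop)
    have a2 : Tendsto (fun r : ℕ => ((r : ℝ))⁻¹) atTop (nhds 0) :=
      tendsto_inv_atTop_zero.comp tendsto_natCast_atTop_atTop
    simpa using (a1.const_mul C).add (a2.const_mul C)
  refine squeeze_zero' (Eventually.of_forall fun _ => dist_nonneg) ?_ h1
  filter_upwards [eventually_gt_atTop 0] with r hr
  have hr' : (0 : ℝ) < r := by exact_mod_cast hr
  have e1 : ((r : ℝ)⁻¹ • birk s r) i - v i = (r : ℝ)⁻¹ * (birk s r i - r * v i) := by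
    simp only [Pi.smul_apply, smul_eq_mul]; field_simp
  rw [Real.dist_eq, e1, abs_mul, abs_of_pos (inv_pos.2 hr')]
  have hs : (√(r : ℝ))⁻¹ = (r : ℝ)⁻¹ * √(r : ℝ) := by
    have := Real.mul_self_sqrt hr'.le
    have h0 : √(r : ℝ) ≠ 0 := (Real.sqrt_pos.2 hr').ne'
    field_simp
    nlinarith
  rw [hs]
  have := mul_le_mul_of_nonneg_left (h r i) (inv_pos.2 hr').le
  linarith

/-- Frequency vectors of the short good words. -/
noncomputable def FF (w : Seq3) (N : ℕ) : Set (Fin 3 → ℝ) :=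
  (fun q : ℕ × Fin 3 => ((q.1 : ℝ) + 1)⁻¹ • (birk w q.1 + ee q.2)) ''
    {q : ℕ × Fin 3 | q.1 < N ∧ q.2 < w q.1}

lemma idx_finite (w : Seq3) (N : ℕ) : {q : ℕ × Fin 3 | q.1 < N ∧ q.2 < w q.1}.Finite := by
  refine ((Set.finite_Iio N).prod (Set.finite_univ (α := Fin 3))).subset ?_
  rintro ⟨a, b⟩ ⟨h, -⟩
  exact ⟨h, trivial⟩

lemma FF_finite (w : Seq3) (N : ℕ) : (FF w N).Finite := (idx_finite w N).image _

/-- Error vector of a good word. -/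
noncomputable def vv (w : Seq3) (x : Fin 3 → ℝ) (q : ℕ × Fin 3) : Fin 3 → ℝ :=
  birk w q.1 + ee q.2 - ((q.1 : ℝ) + 1) • x

lemma exists_sel (w : Seq3) (N : ℕ) (x : Fin 3 → ℝ) (hx : x ∈ convexHull ℝ (FF w N))
    (E : Fin 3 → ℝ) : ∃ q : ℕ × Fin 3, (q.1 < N ∧ q.2 < w q.1) ∧ E ⬝ᵥ vv w x q ≤ 0 := by
  by_contra! hcon
  have hc : Convex ℝ {y : Fin 3 → ℝ | E ⬝ᵥ x < E ⬝ᵥ y} := by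
    apply convex_halfSpace_gt
    constructor
    · intro a b; exact dotProduct_add _ _ _
    · intro c a; exact dotProduct_smul _ _ _
  have hsub : FF w N ⊆ {y : Fin 3 → ℝ | E ⬝ᵥ x < E ⬝ᵥ y} := by
    rintro y ⟨q, hq, rfl⟩
    have h1 := hcon q hq
    have hp : (0 : ℝ) < (q.1 : ℝ) + 1 := by positivity
    simp only [vv, dotProduct_sub, dotProduct_smul, smul_eq_mul] at h1
    simp only [Set.mem_ofPred_eq, dotProduct_smul, smul_eq_mul]
    rw [inv_mul_eq_div, lt_div_iff₀ hp]
    linarith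
  have := convexHull_min hsub hc hx
  simp at this

/-- The state machine. -/
noncomputable def st (w : Seq3) (x : Fin 3 → ℝ) (sel : (Fin 3 → ℝ) → ℕ × Fin 3) :
    ℕ → (Fin 3 → ℝ) × ℕ
  | 0 => (0, 0)
  | n + 1 =>
    let p := st w x sel n
    if p.2 < (sel p.1).1 then (p.1, p.2 + 1) else (p.1 + vv w x (sel p.1), 0)

lemma hull_sub (w : Seq3) (hw : w ∈ MaxSet) (N : ℕ) : convexHull ℝ (FF w N) ⊆ DF w := by
  intro x hx
  choose sel hsel hE using exists_sel w N x hx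
  set p := st w x sel with hp
  have hstep : ∀ n, p (n + 1) = if (p n).2 < (sel (p n).1).1 then ((p n).1, (p n).2 + 1) else
      ((p n).1 + vv w x (sel (p n).1), 0) := fun n => rfl
  have hp0 : p 0 = (0, 0) := rfl
  let s : Seq3 := fun n => if (p n).2 < (sel (p n).1).1 then w (p n).2 else (sel (p n).1).2
  have hs : ∀ n, s n = if (p n).2 < (sel (p n).1).1 then w (p n).2 else (sel (p n).1).2 :=
    fun n => rfl
  have hle : ∀ n, (p n).2 ≤ (sel (p n).1).1 := by
    intro n
    induction n with
    | zero => rw [hp0]; exact Nat.zero_le _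
    | succ n ih =>
      rw [hstep]
      split_ifs with h
      · exact h
      · exact Nat.zero_le _
  have hb : ∀ n : ℕ, birk s n - (n : ℝ) • x =
      (p n).1 + (birk w (p n).2 - ((p n).2 : ℝ) • x) := by
    intro n
    induction n with
    | zero => simp [hp0, birk_zero]
    | succ n ih =>
      rw [birk_succ, hs, hstep]
      split_ifs with h
      · have : birk s n = (p n).1 + (birk w (p n).2 - ((p n).2 : ℝ) • x) + (n : ℝ) • x := by
          rw [← ih]; abel
        simp only [birk_succ, this]
        push_cast
        module
      · have : birk s n = (p n).1 + (birk w (p n).2 - ((p n).2 : ℝ) • x) + (n : ℝ) • x := by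
          rw [← ih]; abel
        have h2 : (p n).2 = (sel (p n).1).1 := le_antisymm (hle n) (not_lt.1 h)
        simp only [birk_zero, this, vv, h2]
        push_cast
        module
  obtain ⟨C1, hC1⟩ := ((idx_finite w N).image (fun q => vv w x q ⬝ᵥ vv w x q)).bddAbove
  have hC1' : ∀ E, vv w x (sel E) ⬝ᵥ vv w x (sel E) ≤ C1 := fun E =>
    hC1 (Set.mem_image_of_mem _ (hsel E))
  have hC0 : 0 ≤ C1 := by
    refine le_trans ?_ (hC1' 0)
    exact Finset.sum_nonneg fun i _ => mul_self_nonneg _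
  have hnorm : ∀ n : ℕ, (p n).1 ⬝ᵥ (p n).1 ≤ C1 * n := by
    intro n
    induction n with
    | zero => simp [hp0]
    | succ n ih =>
      rw [hstep]
      push_cast
      split_ifs with h
      · simp only; linarith
      · have a1 := hE (p n).1
        have a2 := hC1' (p n).1
        simp only [add_dotProduct, dotProduct_add]
        rw [dotProduct_comm (vv w x (sel (p n).1)) (p n).1]
        linarith
  obtain ⟨C2, hC2⟩ := (((Set.finite_Iio N).prod (Set.finite_univ (α := Fin 3))).image
    (fun q : ℕ × Fin 3 => |(birk w q.1 - (q.1 : ℝ) • x) q.2|)).bddAbove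
  have hC2' : ∀ k < N, ∀ i, |(birk w k - (k : ℝ) • x) i| ≤ C2 := fun k hk i =>
    hC2 (Set.mem_image_of_mem (fun q : ℕ × Fin 3 => |(birk w q.1 - (q.1 : ℝ) • x) q.2|)
      (show ((k, i) : ℕ × Fin 3) ∈ Set.Iio N ×ˢ (Set.univ : Set (Fin 3)) from ⟨hk, trivial⟩))
  refine ⟨s, ?_, ?_⟩
  · intro r
    refine lexLe_trans ?_ (hw.2 (p r).2)
    right
    set k := (sel (p r).1).1 with hk
    have hst : ∀ l, l ≤ k - (p r).2 → p (r + l) = ((p r).1, (p r).2 + l) := by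
      intro l
      induction l with
      | zero => intro _; rfl
      | succ l ih =>
        intro hl
        have := ih (by omega)
        rw [← add_assoc, hstep, this]
        simp only
        rw [if_pos (by omega), add_assoc]
    have hler := hle r
    refine ⟨k - (p r).2, ?_, ?_⟩
    · intro i hi
      rw [shift_iter, shift_iter, add_comm i r, hs, hst i hi.le]
      simp only
      rw [if_pos (by omega), add_comm]
    · rw [shift_iter, shift_iter, add_comm _ r, hs, hst _ le_rfl]
      simp only
      rw [if_neg (by omega)]
      have : k - (p r).2 + (p r).2 = k := by omega
      rw [this]
      exact (hsel _).2
  · apply hasFreq_of_bound s x (max (√C1) C2)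
    intro r i
    have e1 : birk s r i - r * x i = (p r).1 i + (birk w (p r).2 - ((p r).2 : ℝ) • x) i := by
      have := congrFun (hb r) i
      simpa using this
    rw [e1]
    have b1 : |(p r).1 i| ≤ √C1 * √r := by
      rw [← Real.sqrt_mul hC0]
      apply Real.abs_le_sqrt
      refine le_trans ?_ (hnorm r)
      rw [sq]
      exact Finset.single_le_sum (f := fun i => (p r).1 i * (p r).1 i)
        (fun i _ => mul_self_nonneg _) (Finset.mem_univ i)
    have b2 := hC2' (p r).2 (lt_of_le_of_lt (hle r) (hsel _).1) i
    have b3 : √C1 * √r ≤ max (√C1) C2 * √r := by gcongr; exact le_max_left _ _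
    have b4 : C2 ≤ max (√C1) C2 := le_max_right _ _
    have := abs_add_le ((p r).1 i) ((birk w (p r).2 - ((p r).2 : ℝ) • x) i)
    linarith

lemma birk_per (w : Seq3) (m p : ℕ) (hper : ∀ r, m ≤ r → w (r + p) = w r) (r : ℕ) (hr : m ≤ r) :
    birk w (r + p) = birk w r + (birk w (m + p) - birk w m) := by
  induction r, hr using Nat.le_induction with
  | base => abel
  | succ r hr ih =>
    rw [show r + 1 + p = (r + p) + 1 by omega, birk_succ, birk_succ, ih, hper r hr]; abel

lemma eventually_bdd (D : ℕ → ℝ) (m p : ℕ) (hp : 1 ≤ p) (h : ∀ r, m ≤ r → D (r + p) ≤ D r) :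
    ∃ C, 0 ≤ C ∧ ∀ r, D r ≤ C := by
  refine ⟨∑ i ∈ Finset.range (m + p), |D i|, Finset.sum_nonneg fun _ _ => abs_nonneg _, ?_⟩
  intro r
  induction r using Nat.strong_induction_on with
  | _ r ih =>
    by_cases hr : r < m + p
    · exact (le_abs_self _).trans (Finset.single_le_sum (f := fun i => |D i|)
        (fun _ _ => abs_nonneg _) (Finset.mem_range.2 hr))
    · have h1 := h (r - p) (by omega)
      rw [show r - p + p = r by omega] at h1
      exact h1.trans (ih _ (by omega))

/-- Frequency of the period. -/
noncomputable def fP (w : Seq3) (m p : ℕ) : Fin 3 → ℝ :=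
  (p : ℝ)⁻¹ • (birk w (m + p) - birk w m)

lemma fP_mem (w : Seq3) (hw : w ∈ MaxSet) (m p : ℕ) (hp : 1 ≤ p)
    (hper : ∀ r, m ≤ r → w (r + p) = w r) : fP w m p ∈ DF w := by
  refine ⟨w, hw.2, ?_⟩
  have hp' : (p : ℝ) ≠ 0 := by positivity
  have key : ∀ i, ∃ C, 0 ≤ C ∧ ∀ r : ℕ, |birk w r i - r * fP w m p i| ≤ C := by
    intro i
    apply eventually_bdd (fun r : ℕ => |birk w r i - r * fP w m p i|) m p hp
    intro r hr
    apply le_of_eq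
    congr 1
    simp only [birk_per w m p hper r hr, fP, Pi.add_apply, Pi.sub_apply, Pi.smul_apply,
      smul_eq_mul]
    push_cast
    field_simp
    ring
  choose C hC0 hC using key
  apply hasFreq_of_bound w _ (∑ i, C i)
  intro r i
  have h0 : 0 ≤ ∑ i, C i := Finset.sum_nonneg fun i _ => hC0 i
  have h1 : C i ≤ ∑ i, C i := Finset.single_le_sum (fun i _ => hC0 i) (Finset.mem_univ i)
  have h2 : 0 ≤ (∑ i, C i) * √r := by positivity
  linarith [hC i r]

lemma DF_sub (w : Seq3) (m p : ℕ) (hp : 1 ≤ p)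
    (hper : ∀ r, m ≤ r → w (r + p) = w r) :
    DF w ⊆ convexHull ℝ (insert (fP w m p) (FF w (m + p))) := by
  rintro x ⟨s, hs, hx⟩
  by_contra hcon
  have hp' : (0 : ℝ) < p := by exact_mod_cast hp
  have hcl : IsClosed (convexHull ℝ (insert (fP w m p) (FF w (m + p)))) :=
    ((FF_finite w (m + p)).insert _).isClosed_convexHull ℝ
  obtain ⟨f, u, hf, hu⟩ := geometric_hahn_banach_closed_point (convex_convexHull ℝ _) hcl hcon
  have hf' : ∀ a ∈ insert (fP w m p) (FF w (m + p)), f a < u :=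
    fun a ha => hf a (subset_convexHull ℝ _ ha)
  let S : Seq3 → ℕ → ℝ := fun s r => f (birk s r) - r * u
  have hS0 : ∀ s, S s 0 = 0 := fun s => by simp [S, birk_zero]
  have hSs : ∀ s r, S s (r + 1) = S s r + (f (ee (s r)) - u) := fun s r => by
    simp only [S, birk_succ, map_add]; push_cast; ring
  have hSper : ∀ r, m ≤ r → S w (r + p) ≤ S w r := by
    intro r hr
    have h1 := hf' _ (Set.mem_insert _ _)
    simp only [fP, map_smul, smul_eq_mul] at h1
    rw [inv_mul_eq_div, div_lt_iff₀ hp'] at h1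
    simp only [S, birk_per w m p hper r hr, map_add]
    push_cast
    linarith
  obtain ⟨C, hC0, hC⟩ := eventually_bdd (S w) m p hp hSper
  have hword : ∀ k, ∀ a, a < w k → S w k + (f (ee a) - u) ≤ 0 := by
    intro k
    induction k using Nat.strong_induction_on with
    | _ k ih =>
      intro a ha
      by_cases hk : k < m + p
      · have h1 := hf' _ (Set.mem_insert_of_mem _ (Set.mem_image_of_mem _
          (show ((k, a) : ℕ × Fin 3) ∈ {q : ℕ × Fin 3 | q.1 < m + p ∧ q.2 < w q.1} from
            ⟨hk, ha⟩)))
        simp only [map_smul, smul_eq_mul, map_add] at h1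
        rw [inv_mul_eq_div, div_lt_iff₀ (by positivity)] at h1
        simp only [S]
        linarith
      · have e : k - p + p = k := by omega
        have h1 := hSper (k - p) (by omega)
        have h2 := hper (k - p) (by omega)
        rw [e] at h1 h2
        have := ih (k - p) (by omega) a (by rw [← h2]; exact ha)
        linarith
  have hsplit : ∀ (s : Seq3) (a b : ℕ), S s (a + b) = S s a + S (shift^[a] s) b := by
    intro s a b
    induction b with
    | zero => simp [hS0]
    | succ b ih => rw [← add_assoc, hSs, hSs, ih, shift_iter, add_comm b a]; ring
  have hcongr : ∀ (s t : Seq3) (r : ℕ), (∀ i, i < r → s i = t i) → S s r = S t r := by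
    intro s t r
    induction r with
    | zero => intro _; simp [hS0]
    | succ r ih =>
      intro h
      rw [hSs, hSs, ih (fun i hi => h i (by omega)), h r (by omega)]
  have hbd : ∀ r : ℕ, ∀ s ∈ BetaShift w, S s r ≤ C := by
    intro r
    induction r using Nat.strong_induction_on with
    | _ r ih =>
      intro s hs
      rcases hs 0 with h | ⟨k, hk, hk'⟩
      · rw [show s = w from h]; exact hC r
      · have hk : ∀ i, i < k → s i = w i := hk
        have hk' : s k < w k := hk'
        by_cases hr : r ≤ k
        · rw [hcongr s w r (fun i hi => hk i (by omega))]; exact hC r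
        · obtain ⟨b, rfl⟩ : ∃ b, r = (k + 1) + b := ⟨r - (k + 1), by omega⟩
          rw [hsplit, hSs, hcongr s w k hk]
          have h1 := hword k _ hk'
          have h2 := ih b (by omega) (shift^[k + 1] s) (by
            intro j
            rw [← Function.iterate_add_apply]
            exact hs _)
          linarith
  have hlim : Tendsto (fun r : ℕ => f ((r : ℝ)⁻¹ • birk s r)) atTop (nhds (f x)) :=
    (f.continuous.tendsto x).comp hx
  have hlim2 : Tendsto (fun r : ℕ => u + C * (r : ℝ)⁻¹) atTop (nhds u) := by
    have a2 : Tendsto (fun r : ℕ => ((r : ℝ))⁻¹) atTop (nhds 0) :=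
      tendsto_inv_atTop_zero.comp tendsto_natCast_atTop_atTop
    simpa using (a2.const_mul C).const_add u
  have : f x ≤ u := by
    refine le_of_tendsto_of_tendsto hlim hlim2 ?_
    filter_upwards [eventually_gt_atTop 0] with r hr
    have hr' : (0 : ℝ) < r := by exact_mod_cast hr
    have h1 := hbd r s hs
    simp only [S] at h1
    rw [map_smul, smul_eq_mul, inv_mul_eq_div, div_le_iff₀ hr', add_mul, mul_assoc,
      inv_mul_cancel₀ hr'.ne']
    linarith
  linarith

lemma finite_of_evper (w : Seq3) (hw : w ∈ MaxSet) (m p : ℕ) (hp : 1 ≤ p)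
    (hper : ∀ r, m ≤ r → w (r + p) = w r) : (Set.extremePoints ℝ (DF w)).Finite := by
  refine ((FF_finite w (m + p)).insert (fP w m p)).subset ?_
  intro x hx
  by_contra hcon
  rw [Set.mem_insert_iff, not_or] at hcon
  have hsub := hull_sub w hw (m + p)
  have hne : (FF w (m + p)).Nonempty := by
    refine Set.Nonempty.image _ ⟨(0, 0), ?_, ?_⟩
    · show 0 < m + p
      omega
    · show (0 : Fin 3) < w 0
      rw [hw.1]; decide
  have h1 := DF_sub w m p hp hper hx.1
  rw [convexHull_insert hne, mem_convexJoin] at h1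
  obtain ⟨a, ha, y, hy, hxy⟩ := h1
  rw [Set.mem_singleton_iff] at ha
  subst ha
  by_cases hxy' : x = y
  · subst hxy'
    have : x ∈ (convexHull ℝ (FF w (m + p))).extremePoints ℝ :=
      inter_extremePoints_subset_extremePoints_of_subset hsub ⟨hy, hx⟩
    exact hcon.2 (extremePoints_convexHull_subset this)
  · have ho : x ∈ openSegment ℝ (fP w m p) y :=
      mem_openSegment_of_ne_left_right (Ne.symm hcon.1) (Ne.symm hxy') hxy
    exact hcon.1 (hx.2 (fP_mem w hw m p hp hper) (hsub hy) ho).symm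

lemma trunc_finite (w w' : Seq3) (hw : w ∈ MaxSet) (n : ℕ)
    (hn : ∀ i, i < n → w' i = w i) (hn' : w' n < w n) (h : DF w' = DF w) :
    (Set.extremePoints ℝ (DF w)).Finite := by
  let v : Seq3 := fun i => if i ≤ n then w i else 0
  have hv : ∀ i, v i = if i ≤ n then w i else 0 := fun i => rfl
  have hvw : lexLe v w := by
    by_cases hvw : v = w
    · exact Or.inl hvw
    · have hex : ∃ i, v i ≠ w i := Function.ne_iff.1 hvw
      classical
      refine Or.inr ⟨Nat.find hex, fun i hi => not_not.1 (Nat.find_min hex hi), ?_⟩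
      have h1 := Nat.find_spec hex
      set k := Nat.find hex
      rw [hv] at h1 ⊢
      split_ifs at h1 ⊢ with hk
      · exact absurd rfl h1
      · exact Fin.pos_iff_ne_zero.2 (Ne.symm h1)
  have hw'v : lexLe w' v := by
    refine Or.inr ⟨n, fun i hi => ?_, ?_⟩
    · rw [hv, if_pos hi.le, hn i hi]
    · rw [hv, if_pos le_rfl]; exact hn'
  have hvM : v ∈ MaxSet := by
    refine ⟨by rw [hv, if_pos (Nat.zero_le _), hw.1], ?_⟩
    intro r
    by_cases heq : shift^[r] v = v
    · exact Or.inl heq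
    have hex : ∃ i, (shift^[r] v) i ≠ v i := Function.ne_iff.1 heq
    classical
    refine Or.inr ⟨Nat.find hex, fun i hi => not_not.1 (Nat.find_min hex hi), ?_⟩
    have h1 := Nat.find_spec hex
    have h2 : ∀ i, i < Nat.find hex → (shift^[r] v) i = v i :=
      fun i hi => not_not.1 (Nat.find_min hex hi)
    set k := Nat.find hex
    rw [shift_iter] at h1 ⊢
    by_cases hk : k + r ≤ n
    · have g1 : ∀ i, i ≤ k → v (i + r) = w (i + r) := fun i hi => by
        rw [hv, if_pos (by omega)]
      have g2 : ∀ i, i ≤ k → v i = w i := fun i hi => by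
        rw [hv, if_pos (by omega)]
      have h3 : ∀ i, i < k → w (i + r) = w i := fun i hi => by
        rw [← g1 i hi.le, ← g2 i hi.le, ← h2 i hi, shift_iter]
      rw [g1 k le_rfl, g2 k le_rfl] at h1 ⊢
      rcases hw.2 r with h | ⟨j, hj, hj'⟩
      · exact absurd (by rw [← shift_iter w r k, h]) h1
      · rw [shift_iter] at hj'
        rcases lt_trichotomy j k with c | c | c
        · rw [h3 j c] at hj'; exact absurd hj' (lt_irrefl _)
        · rw [← c]; exact hj'
        · exact absurd (by rw [← hj k c, shift_iter]) h1
    · have : v (k + r) = 0 := by rw [hv, if_neg hk]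
      rw [this] at h1 ⊢
      exact Fin.pos_iff_ne_zero.2 (Ne.symm h1)
  have hDF : DF w = DF v :=
    Set.Subset.antisymm (h ▸ DF_mono hw'v) (DF_mono hvw)
  rw [hDF]
  refine finite_of_evper v hvM (n + 1) 1 le_rfl ?_
  intro r hr
  rw [hv, hv, if_neg (by omega), if_neg (by omega)]

/-- If the set of extreme points of `DF(w)` is infinite, then `w` is not
eventually periodic, and `DF` is injective at `w`. -/
theorem stmt10 (w : Seq3) (hw : w ∈ MaxSet)
    (hinf : (Set.extremePoints ℝ (DF w)).Infinite) :
    (¬ ∃ (m p : ℕ), 1 ≤ p ∧ ∀ r, m ≤ r → w (r + p) = w r) ∧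
      ∀ w' ∈ MaxSet, DF w' = DF w → w' = w := by
  refine ⟨?_, ?_⟩
  · rintro ⟨m, p, hp, hper⟩
    exact hinf (finite_of_evper w hw m p hp hper)
  · intro w' hw' hDF
    by_contra hne
    have hex : ∃ i, w' i ≠ w i := Function.ne_iff.1 hne
    classical
    have h1 := Nat.find_spec hex
    have h2 : ∀ i, i < Nat.find hex → w' i = w i :=
      fun i hi => not_not.1 (Nat.find_min hex hi)
    rcases lt_or_gt_of_ne h1 with h | h
    · exact hinf (trunc_finite w w' hw _ h2 h hDF)
    · refine hinf ?_
      rw [← hDF]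
      exact trunc_finite w' w hw' _ (fun i hi => (h2 i hi).symm) h hDF.symm
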